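/- Let q be a real number with 0 < q < 1. Then ∑_{n∈ℤ} q^{5n}/(1 + q^{10n+1}) = f(q⁴, q⁶)·((q^{10}; q^{10})∞)³ / (φ(−q⁵)·f(q, q⁹)), where both φ(−q⁵) and f(q, q⁹) are nonzero for 0 < q < 1. -/

import Mathlib

/-- Ramanujan's theta function `f(a,b) = ∑_{n ∈ ℤ} a^(n(n+1)/2) b^(n(n-1)/2)`. -/
noncomputable def ramTheta (a b : ℂ) : ℂ :=
  ∑' n : ℤ, a ^ ((n * (n + 1)) / 2).toNat * b ^ ((n * (n - 1)) / 2).toNat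

/-- `φ(q) = f(q,q)`. -/
noncomputable def phi (q : ℂ) : ℂ := ramTheta q q

/-- `ψ(q) = f(q,q³)`. -/
noncomputable def psi (q : ℂ) : ℂ := ramTheta q (q ^ 3)

/-- `(a;q)_∞ = ∏_{k=0}^∞ (1 - a q^k)`. -/
noncomputable def qPochInf (a q : ℂ) : ℂ := ∏' k : ℕ, (1 - a * q ^ k)

/-! The quotient `θ(z) / (1 - z)` of the theta series `θ(z) = ∑ (-1)^n p^(n(n-1)/2) z^n` has a
Laurent expansion on all of `ℂ \ {0}`. Since `θ(a)` and `θ(a p^n)` differ by a monomial factor,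
each term `b^n θ(a) / (1 - a p^n)` is a monomial times the value of this expansion at `a p^n`. In
the resulting double sum over `(n, k)` the substitution `m = n + k` separates the variables: the sum
over `m` is `θ(ab)` and the sum over `k` does not depend on `a`. The latter is determined by
`a = 1`, where only `n = 0` contributes: by the Jacobi triple product, its product with `θ(b)` is
the value `(p; p)_∞^3` of `θ(z) / (1 - z)` at `z = 1`. The theorem is the case `p = q^10`,
`a = -q`, `b = q^5`. The triple product itself is the limit of a finite version, whose two sides
satisfy the same recurrence. -/

open Filter Topology

lemma continuousAt_tsum_mul_zpow {c : ℤ → ℂ} {z : ℂ}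
    (hc : ∀ w ≠ 0, Summable fun k : ℤ ↦ c k * w ^ k) (hz : z ≠ 0) :
    ContinuousAt (fun w ↦ ∑' k : ℤ, c k * w ^ k) z := by
  let annulus : Set ℂ := {w | ‖z / 2‖ < ‖w‖ ∧ ‖w‖ < ‖z * 2‖}
  have hopen : IsOpen annulus :=
    (isOpen_lt continuous_const continuous_norm).inter (isOpen_lt continuous_norm continuous_const)
  have hz0 : 0 < ‖z‖ := norm_pos_iff.mpr hz
  have hmem : z ∈ annulus := by
    constructor <;> simp only [norm_div, norm_mul, Complex.norm_ofNat] <;> linarith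
  have hne (w : ℂ) (hw : w ∈ annulus) : w ≠ 0 :=
    norm_pos_iff.mp ((norm_nonneg _).trans_lt hw.1)
  refine (continuousOn_tsum (u := fun k ↦ ‖c k * (z * 2) ^ k‖ + ‖c k * (z / 2) ^ k‖)
    (fun k w hw ↦ ?_) ?_ fun k w hw ↦ ?_).continuousAt (hopen.mem_nhds hmem)
  · exact (continuousAt_const.mul (continuousAt_zpow₀ w k (.inl (hne w hw)))).continuousWithinAt
  · exact (hc _ (by simpa using hz)).norm.add (hc _ (by simpa using hz)).norm
  · have hw0 : 0 < ‖w‖ := norm_pos_iff.mpr (hne w hw)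
    simp only [norm_mul, norm_zpow, ← mul_add]
    refine mul_le_mul_of_nonneg_left ?_ (norm_nonneg _)
    rcases le_total 0 k with hk | hk
    · have h := zpow_le_zpow_left₀ hk hw0.le hw.2.le
      simp only [norm_mul] at h
      exact le_add_of_le_of_nonneg h (by positivity)
    · have h := zpow_le_zpow_left₀ (neg_nonneg.mpr hk) (by positivity)
        (inv_anti₀ (norm_pos_iff.mpr (by simpa using hz)) hw.1.le)
      simp only [inv_zpow', neg_neg] at h
      exact le_add_of_nonneg_of_le (by positivity) h

section QPochhammer

variable {a q : ℂ}

lemma summable_norm_neg_mul_pow (a : ℂ) (hq : ‖q‖ < 1) :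
    Summable fun k : ℕ ↦ ‖-(a * q ^ k)‖ := by
  simpa using (summable_geometric_of_lt_one (norm_nonneg q) hq).mul_left ‖a‖

lemma multipliable_one_sub_mul_pow (a : ℂ) (hq : ‖q‖ < 1) :
    Multipliable fun k : ℕ ↦ 1 - a * q ^ k := by
  simpa only [← sub_eq_add_neg] using
    multipliable_one_add_of_summable (summable_norm_neg_mul_pow a hq)

lemma qPochInf_ne_zero (hq : ‖q‖ < 1) (ha : ∀ k : ℕ, a * q ^ k ≠ 1) : qPochInf a q ≠ 0 := by
  have h := tprod_one_add_ne_zero_of_summable (f := fun k : ℕ ↦ -(a * q ^ k))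
    (fun k ↦ by simpa only [← sub_eq_add_neg, sub_ne_zero] using (ha k).symm)
    (summable_norm_neg_mul_pow a hq)
  simpa only [← sub_eq_add_neg, qPochInf] using h

lemma self_mul_pow_ne_one (hq : ‖q‖ < 1) (k : ℕ) : q * q ^ k ≠ 1 := fun h ↦ by
  have : ‖q ^ (k + 1)‖ < 1 := by
    simpa only [norm_pow] using pow_lt_one₀ (norm_nonneg q) hq k.succ_ne_zero
  simp [pow_succ', h] at this

lemma qPochInf_eq_one_sub_mul (a : ℂ) (hq : ‖q‖ < 1) :
    qPochInf a q = (1 - a) * qPochInf (a * q) q := by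
  rw [qPochInf, qPochInf, tprod_eq_zero_mul' (by
    simpa only [pow_succ', mul_assoc] using multipliable_one_sub_mul_pow (a * q) hq)]
  simp only [pow_zero, mul_one, pow_succ', mul_assoc]

lemma continuous_qPochInf (hq : ‖q‖ < 1) : Continuous fun a ↦ qPochInf a q := by
  refine continuous_iff_continuousAt.mpr fun a ↦ ?_
  have hball : Metric.ball (0 : ℂ) (‖a‖ + 1) ∈ 𝓝 a :=
    Metric.isOpen_ball.mem_nhds (by simp)
  have hbound (k : ℕ) (w : ℂ) (hw : w ∈ Metric.ball 0 (‖a‖ + 1)) :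
      ‖-(w * q ^ k)‖ ≤ (‖a‖ + 1) * ‖q‖ ^ k := by
    rw [norm_neg, norm_mul, norm_pow]
    gcongr
    simpa using (Metric.mem_ball.mp hw).le
  have hprod := ((summable_geometric_of_lt_one (norm_nonneg q) hq).mul_left
    (‖a‖ + 1)).hasProdLocallyUniformlyOn_nat_one_add (f := fun k w ↦ -(w * q ^ k))
    Metric.isOpen_ball (.of_forall hbound) fun k ↦ by fun_prop
  have hcont := ((hasProdLocallyUniformlyOn_iff_tendstoLocallyUniformlyOn.mp hprod).continuousOn
    (.of_forall fun s ↦ by fun_prop)).continuousAt hball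
  simpa only [qPochInf, ← sub_eq_add_neg] using hcont

/-- The finite `q`-Pochhammer symbol `(a; q)_n`. -/
noncomputable def qPoch (a q : ℂ) (n : ℕ) : ℂ := ∏ k ∈ Finset.range n, (1 - a * q ^ k)

lemma qPoch_zero (a q : ℂ) : qPoch a q 0 = 1 := Finset.prod_range_zero _

lemma qPoch_succ (a q : ℂ) (n : ℕ) : qPoch a q (n + 1) = qPoch a q n * (1 - a * q ^ n) :=
  Finset.prod_range_succ _ _

lemma tendsto_qPoch (a : ℂ) (hq : ‖q‖ < 1) :
    Tendsto (qPoch a q) atTop (𝓝 (qPochInf a q)) :=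
  (multipliable_one_sub_mul_pow a hq).hasProd.tendsto_prod_nat

/-- The reciprocal of `(q; q)_k`, extended by `0` to negative `k`, so that the recurrence
`one_sub_zpow_mul_qPochInv` holds for all integers. -/
noncomputable def qPochInv (q : ℂ) (k : ℤ) : ℂ := if k < 0 then 0 else (qPoch q q k.toNat)⁻¹

lemma qPochInv_of_neg (q : ℂ) {k : ℤ} (hk : k < 0) : qPochInv q k = 0 := if_pos hk

lemma qPochInv_natCast (q : ℂ) (k : ℕ) : qPochInv q k = (qPoch q q k)⁻¹ := by simp [qPochInv]

lemma one_sub_zpow_mul_qPochInv (hq : ‖q‖ < 1) (k : ℤ) :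
    (1 - q ^ k) * qPochInv q k = qPochInv q (k - 1) := by
  rcases lt_trichotomy k 0 with hk | rfl | hk
  · rw [qPochInv_of_neg q hk, qPochInv_of_neg q (by omega), mul_zero]
  · rw [qPochInv_of_neg q (k := 0 - 1) (by omega), zpow_zero, sub_self, zero_mul]
  · obtain ⟨l, rfl⟩ : ∃ l : ℕ, k = (l + 1 : ℕ) := ⟨(k - 1).toNat, by omega⟩
    have hl : 1 - q * q ^ l ≠ 0 := sub_ne_zero.mpr (self_mul_pow_ne_one hq l).symm
    rw [qPochInv_natCast, zpow_natCast, qPoch_succ, pow_succ', Nat.cast_succ,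
      add_sub_cancel_right, qPochInv_natCast]
    field_simp

lemma tendsto_inv_qPoch_self (hq : ‖q‖ < 1) :
    Tendsto (fun k ↦ (qPoch q q k)⁻¹) atTop (𝓝 (qPochInf q q)⁻¹) :=
  (tendsto_qPoch q hq).inv₀ (qPochInf_ne_zero hq (self_mul_pow_ne_one hq))

lemma tendsto_qPochInv_natCast_add (hq : ‖q‖ < 1) (j : ℤ) :
    Tendsto (fun N : ℕ ↦ qPochInv q (N + j)) atTop (𝓝 (qPochInf q q)⁻¹) := by
  have h : Tendsto (qPochInv q) atTop (𝓝 (qPochInf q q)⁻¹) := by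
    rw [← Nat.map_cast_int_atTop, tendsto_map'_iff]
    exact (tendsto_inv_qPoch_self hq).congr fun k ↦ (qPochInv_natCast q k).symm
  exact h.comp (tendsto_atTop_add_const_right _ j tendsto_natCast_atTop_atTop)

lemma exists_norm_qPochInv_le (hq : ‖q‖ < 1) : ∃ K, ∀ k, ‖qPochInv q k‖ ≤ K := by
  obtain ⟨K, hK⟩ :=
    (Metric.isBounded_range_of_tendsto _ (tendsto_inv_qPoch_self hq)).exists_norm_le
  refine ⟨K, fun k ↦ ?_⟩
  rcases lt_or_ge k 0 with hk | hk
  · simpa [qPochInv_of_neg q hk] using (norm_nonneg _).trans (hK _ ⟨0, rfl⟩)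
  · lift k to ℕ using hk
    exact qPochInv_natCast q k ▸ hK _ ⟨k, rfl⟩

end QPochhammer

section ThetaSeries

variable {p z : ℂ}

/-- The coefficient `(-1)^n p^(n(n-1)/2)` of the theta series `thetaSeries p`. -/
noncomputable def thetaCoeff (p : ℂ) (n : ℤ) : ℂ := (-1) ^ n * p ^ (n * (n - 1) / 2)

lemma mul_sub_one_ediv_two_nonneg (n : ℤ) : 0 ≤ n * (n - 1) / 2 :=
  Int.ediv_nonneg (by nlinarith [Int.le_self_sq n]) two_pos.le

lemma thetaCoeff_zero (p : ℂ) : thetaCoeff p 0 = 1 := by simp [thetaCoeff]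

lemma thetaCoeff_ne_zero (hp0 : p ≠ 0) (n : ℤ) : thetaCoeff p n ≠ 0 :=
  mul_ne_zero (zpow_ne_zero _ (by norm_num)) (zpow_ne_zero _ hp0)

lemma thetaCoeff_add (hp0 : p ≠ 0) (m n : ℤ) :
    thetaCoeff p (m + n) = thetaCoeff p m * thetaCoeff p n * p ^ (m * n) := by
  have hexp : (m + n) * (m + n - 1) / 2 = m * (m - 1) / 2 + n * (n - 1) / 2 + m * n := by
    have hm := (Int.even_mul_pred_self m).two_dvd
    have hn := (Int.even_mul_pred_self n).two_dvd
    rw [show (m + n) * (m + n - 1) = m * (m - 1) + n * (n - 1) + 2 * (m * n) by ring]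
    omega
  rw [thetaCoeff, hexp, zpow_add₀ hp0, zpow_add₀ hp0, zpow_add₀ (by norm_num), thetaCoeff,
    thetaCoeff]
  ring

lemma thetaCoeff_one_sub (p : ℂ) (n : ℤ) : thetaCoeff p (1 - n) = -thetaCoeff p n := by
  rw [thetaCoeff, thetaCoeff, zpow_sub₀ (by norm_num), div_eq_mul_inv, ← inv_zpow,
    show (1 - n) * (1 - n - 1) = n * (n - 1) by ring]
  norm_num

lemma thetaCoeff_add_one (hp0 : p ≠ 0) (n : ℤ) :
    thetaCoeff p (n + 1) = -(thetaCoeff p n * p ^ n) := by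
  simp [thetaCoeff_add hp0 n 1, show thetaCoeff p 1 = -1 by simp [thetaCoeff]]

lemma thetaCoeff_neg (hp0 : p ≠ 0) (n : ℤ) : thetaCoeff p (-n) = thetaCoeff p n * p ^ n := by
  rw [← neg_neg (thetaCoeff p n * p ^ n), ← thetaCoeff_add_one hp0, ← thetaCoeff_one_sub]
  congr 1
  ring

lemma summable_thetaCoeff_mul_pow (hp0 : p ≠ 0) (hp : ‖p‖ < 1) (hz : z ≠ 0) :
    Summable fun n : ℕ ↦ thetaCoeff p n * z ^ n := by
  refine summable_of_ratio_test_tendsto_lt_one zero_lt_one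
    (.of_forall fun n ↦ mul_ne_zero (thetaCoeff_ne_zero hp0 _) (pow_ne_zero _ hz)) ?_
  have hratio (n : ℕ) : ‖thetaCoeff p (n + 1 : ℕ) * z ^ (n + 1)‖ / ‖thetaCoeff p n * z ^ n‖
      = ‖p‖ ^ n * ‖z‖ := by
    have ht := thetaCoeff_ne_zero hp0 n
    rw [← norm_div, Nat.cast_succ, thetaCoeff_add_one hp0, zpow_natCast, ← norm_pow, ← norm_mul,
      ← norm_neg]
    congr 1
    field_simp
    ring
  simp only [hratio]
  simpa using (tendsto_pow_atTop_nhds_zero_of_lt_one (norm_nonneg p) hp).mul_const ‖z‖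

lemma thetaCoeff_neg_mul_zpow_neg (hp0 : p ≠ 0) (z : ℂ) (n : ℤ) :
    thetaCoeff p (-n) * z ^ (-n) = thetaCoeff p n * (p / z) ^ n := by
  rw [thetaCoeff_neg hp0, div_zpow, zpow_neg]
  ring

lemma summable_thetaCoeff_mul_zpow (hp0 : p ≠ 0) (hp : ‖p‖ < 1) (hz : z ≠ 0) :
    Summable fun n : ℤ ↦ thetaCoeff p n * z ^ n := by
  refine Summable.of_nat_of_neg ?_ ?_
  · simpa using summable_thetaCoeff_mul_pow hp0 hp hz
  · simpa only [thetaCoeff_neg_mul_zpow_neg hp0, zpow_natCast] using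
      summable_thetaCoeff_mul_pow hp0 hp (div_ne_zero hp0 hz)

/-- The theta series `∑ (-1)^n p^(n(n-1)/2) z^n`, which in Ramanujan's notation is
`f(-z, -p/z)`. -/
noncomputable def thetaSeries (p z : ℂ) : ℂ := ∑' n : ℤ, thetaCoeff p n * z ^ n

lemma ramTheta_eq_thetaSeries {a : ℂ} (ha : a ≠ 0) (b : ℂ) :
    ramTheta a b = thetaSeries (a * b) (-a) := by
  refine tsum_congr fun n ↦ ?_
  obtain ⟨k, hk⟩ := Int.eq_ofNat_of_zero_le (mul_sub_one_ediv_two_nonneg n)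
  obtain ⟨l, hl⟩ : ∃ l : ℕ, n * (n + 1) / 2 = l :=
    Int.eq_ofNat_of_zero_le (by simpa [mul_comm] using mul_sub_one_ediv_two_nonneg (n + 1))
  have hlk : (l : ℤ) = k + n := by
    rw [← hk, ← hl, show n * (n + 1) = n * (n - 1) + n * 2 by ring,
      Int.add_mul_ediv_right _ _ two_ne_zero]
  have hl' : a ^ l = a ^ k * a ^ n := by
    rw [← zpow_natCast, hlk, zpow_add₀ ha, zpow_natCast]
  have hsign : (-1 : ℂ) ^ n * (-1) ^ n = 1 := by rw [← mul_zpow]; simp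
  rw [thetaCoeff, hk, hl, Int.toNat_natCast, Int.toNat_natCast, hl', zpow_natCast, mul_pow,
    neg_eq_neg_one_mul a, mul_zpow]
  linear_combination -(a ^ k * b ^ k * a ^ n) * hsign

lemma ramTheta_comm (a b : ℂ) : ramTheta a b = ramTheta b a := by
  rw [ramTheta, ← (Equiv.neg ℤ).tsum_eq, ramTheta]
  refine tsum_congr fun n ↦ ?_
  rw [Equiv.neg_apply, show -n * (-n + 1) = n * (n - 1) by ring,
    show -n * (-n - 1) = n * (n + 1) by ring, mul_comm]

lemma phi_neg_eq_thetaSeries {a : ℂ} (ha : a ≠ 0) : phi (-a) = thetaSeries (a ^ 2) a := by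
  rw [phi, ramTheta_eq_thetaSeries (neg_ne_zero.mpr ha), neg_neg, neg_mul_neg, sq]

lemma thetaSeries_eq_mul_thetaSeries_mul_zpow (hp0 : p ≠ 0) (hz : z ≠ 0) (n : ℤ) :
    thetaSeries p z = thetaCoeff p n * z ^ n * thetaSeries p (z * p ^ n) := by
  rw [thetaSeries, thetaSeries, ← (Equiv.addRight n).tsum_eq, ← tsum_mul_left]
  refine tsum_congr fun m ↦ ?_
  rw [Equiv.coe_addRight, thetaCoeff_add hp0, zpow_add₀ hz, mul_zpow, ← zpow_mul, mul_comm m n]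
  ring

end ThetaSeries

section TripleProduct

variable {p z : ℂ}

/-- The finite form of the theta series: multiplied by `(p; p)_(n+m)`, it is the sum
`∑ (-1)^j p^(j(j-1)/2) [n+m, n+j] z^j` with Gaussian binomial coefficients. -/
noncomputable def finThetaSum (p z : ℂ) (n m : ℤ) : ℂ :=
  ∑' j : ℤ, thetaCoeff p j * z ^ j * (qPochInv p (n + j) * qPochInv p (m - j))

lemma exists_summable_bound_finThetaSum (hp0 : p ≠ 0) (hp : ‖p‖ < 1) (hz : z ≠ 0) :
    ∃ u : ℤ → ℝ, Summable u ∧ ∀ n m j : ℤ,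
      ‖thetaCoeff p j * z ^ j * (qPochInv p (n + j) * qPochInv p (m - j))‖ ≤ u j := by
  obtain ⟨K, hK⟩ := exists_norm_qPochInv_le hp
  refine ⟨fun j ↦ ‖thetaCoeff p j * z ^ j‖ * (K * K),
    (summable_thetaCoeff_mul_zpow hp0 hp hz).norm.mul_right _, fun n m j ↦ ?_⟩
  rw [norm_mul, norm_mul (qPochInv _ _)]
  have hK0 : 0 ≤ K := (norm_nonneg _).trans (hK 0)
  exact mul_le_mul_of_nonneg_left
    (mul_le_mul (hK _) (hK _) (norm_nonneg _) hK0) (norm_nonneg _)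

lemma summable_finThetaSum (hp0 : p ≠ 0) (hp : ‖p‖ < 1) (hz : z ≠ 0) (n m : ℤ) :
    Summable fun j : ℤ ↦
      thetaCoeff p j * z ^ j * (qPochInv p (n + j) * qPochInv p (m - j)) := by
  obtain ⟨u, hu, hbound⟩ := exists_summable_bound_finThetaSum hp0 hp hz
  exact .of_norm_bounded hu (hbound n m)

lemma finThetaSum_div (hp0 : p ≠ 0) (z : ℂ) (n m : ℤ) :
    finThetaSum p (p / z) n m = finThetaSum p z m n := by
  rw [finThetaSum, finThetaSum, ← (Equiv.neg ℤ).tsum_eq (fun j ↦ thetaCoeff p j * z ^ j * _)]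
  refine tsum_congr fun j ↦ ?_
  rw [Equiv.neg_apply, thetaCoeff_neg_mul_zpow_neg hp0, ← sub_eq_add_neg, sub_neg_eq_add,
    mul_comm (qPochInv p (n + j))]

lemma finThetaSum_zero_zero (p z : ℂ) : finThetaSum p z 0 0 = 1 := by
  rw [finThetaSum, tsum_eq_single 0]
  · simp [thetaCoeff_zero, qPochInv, qPoch_zero]
  · intro j hj
    rcases hj.lt_or_gt with hj | hj
    · simp [qPochInv_of_neg p hj]
    · simp [qPochInv_of_neg p (neg_lt_zero.mpr hj)]

lemma one_sub_zpow_mul_finThetaSum (hp0 : p ≠ 0) (hp : ‖p‖ < 1) (hz : z ≠ 0) (n m : ℤ) :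
    (1 - p ^ (n + m)) * finThetaSum p z n m = (1 - p ^ n / z) * finThetaSum p z (n - 1) m := by
  set F : ℤ → ℂ := fun j ↦
    thetaCoeff p j * z ^ j * (qPochInv p (n - 1 + j) * qPochInv p (m - j)) with hF
  have hsum : Summable F := summable_finThetaSum hp0 hp hz (n - 1) m
  have hsum' : Summable fun j ↦ p ^ n / z * F (j + 1) :=
    ((Equiv.addRight (1 : ℤ)).summable_iff.mpr hsum).mul_left _
  have hterm (j : ℤ) : (1 - p ^ (n + m)) *
      (thetaCoeff p j * z ^ j * (qPochInv p (n + j) * qPochInv p (m - j))) =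
      F j - p ^ n / z * F (j + 1) := by
    have hn := one_sub_zpow_mul_qPochInv hp (n + j)
    have hm := one_sub_zpow_mul_qPochInv hp (m - j)
    simp only [hF]
    rw [show n - 1 + j = n + j - 1 by ring, show n - 1 + (j + 1) = n + j by ring,
      show m - (j + 1) = m - j - 1 by ring, ← hn, ← hm, thetaCoeff_add_one hp0,
      zpow_add_one₀ hz, show n + m = (n + j) + (m - j) by ring, zpow_add₀ hp0 (n + j),
      zpow_add₀ hp0 n j]
    field_simp
    ring
  have hshift : ∑' j, F (j + 1) = ∑' j, F j := (Equiv.addRight (1 : ℤ)).tsum_eq F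
  rw [finThetaSum, ← tsum_mul_left, tsum_congr hterm, hsum.tsum_sub hsum', tsum_mul_left,
    hshift, finThetaSum]
  ring

lemma finThetaSum_mul_qPoch (hp0 : p ≠ 0) (hp : ‖p‖ < 1) (hz : z ≠ 0) (n m : ℕ) :
    finThetaSum p z n m * qPoch p p (n + m) =
      qPoch (p / z) p n * (finThetaSum p z 0 m * qPoch p p m) := by
  induction n with
  | zero => simp [qPoch_zero]
  | succ n ih =>
    have hrec := one_sub_zpow_mul_finThetaSum hp0 hp hz (n + 1) m
    rw [add_sub_cancel_right, show (n : ℤ) + 1 + m = (n + m + 1 : ℕ) by push_cast; ring,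
      zpow_natCast, pow_succ', zpow_add_one₀ hp0, zpow_natCast] at hrec
    rw [show n + 1 + m = n + m + 1 by ring, qPoch_succ, qPoch_succ, Nat.cast_succ]
    linear_combination qPoch p p (n + m) * hrec + (1 - p / z * p ^ n) * ih

lemma finThetaSum_mul_qPoch_eq (hp0 : p ≠ 0) (hp : ‖p‖ < 1) (hz : z ≠ 0) (n m : ℕ) :
    finThetaSum p z n m * qPoch p p (n + m) = qPoch (p / z) p n * qPoch z p m := by
  have h := finThetaSum_mul_qPoch hp0 hp (div_ne_zero hp0 hz) m 0
  rw [finThetaSum_div hp0, div_div_cancel₀ hp0, Nat.cast_zero, finThetaSum_zero_zero] at h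
  rw [finThetaSum_mul_qPoch hp0 hp hz]
  simpa only [add_zero, qPoch_zero, mul_one] using congrArg (qPoch (p / z) p n * ·) h

theorem jacobi_tripleProduct (hp0 : p ≠ 0) (hp : ‖p‖ < 1) (hz : z ≠ 0) :
    thetaSeries p z = qPochInf z p * qPochInf (p / z) p * qPochInf p p := by
  have hP : qPochInf p p ≠ 0 := qPochInf_ne_zero hp (self_mul_pow_ne_one hp)
  obtain ⟨u, hu, hbound⟩ := exists_summable_bound_finThetaSum hp0 hp hz
  have hlim : Tendsto (fun N : ℕ ↦ finThetaSum p z N N) atTop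
      (𝓝 (thetaSeries p z * ((qPochInf p p)⁻¹ * (qPochInf p p)⁻¹))) := by
    rw [thetaSeries, ← tsum_mul_right]
    refine tendsto_tsum_of_dominated_convergence hu (fun j ↦ ?_)
      (.of_forall fun N j ↦ hbound N N j)
    exact ((tendsto_qPochInv_natCast_add hp j).mul
      (tendsto_qPochInv_natCast_add hp (-j))).const_mul _
  have hlim' : Tendsto (fun N : ℕ ↦ finThetaSum p z N N * qPoch p p (N + N)) atTop
      (𝓝 (qPochInf (p / z) p * qPochInf z p)) := by
    simp only [finThetaSum_mul_qPoch_eq hp0 hp hz]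
    exact (tendsto_qPoch _ hp).mul (tendsto_qPoch _ hp)
  have h := tendsto_nhds_unique (hlim.mul ((tendsto_qPoch p hp).comp
    (tendsto_id.atTop_add_nonneg fun _ ↦ Nat.zero_le _))) hlim'
  field_simp at h
  linear_combination h

lemma thetaSeries_ne_zero (hp0 : p ≠ 0) (hp : ‖p‖ < 1) (hz : z ≠ 0)
    (hzp : ∀ n : ℤ, z * p ^ n ≠ 1) : thetaSeries p z ≠ 0 := by
  rw [jacobi_tripleProduct hp0 hp hz]
  refine mul_ne_zero (mul_ne_zero (qPochInf_ne_zero hp fun k ↦ mod_cast hzp k)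
    (qPochInf_ne_zero hp fun k hk ↦ hzp (-(k + 1)) ?_))
    (qPochInf_ne_zero hp (self_mul_pow_ne_one hp))
  rw [zpow_neg, zpow_add_one₀ hp0, zpow_natCast]
  field_simp at hk ⊢
  exact hk.symm

end TripleProduct

section ThetaQuotient

variable {p a b z : ℂ}

lemma norm_thetaCoeff_le_one (hp : ‖p‖ < 1) (n : ℤ) : ‖thetaCoeff p n‖ ≤ 1 := by
  obtain ⟨k, hk⟩ := Int.eq_ofNat_of_zero_le (mul_sub_one_ediv_two_nonneg n)
  rw [thetaCoeff, hk, norm_mul, norm_zpow, norm_neg, norm_one, one_zpow, one_mul, zpow_natCast,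
    norm_pow]
  exact pow_le_one₀ (norm_nonneg p) hp.le

lemma norm_thetaCoeff_neg_sub_le (hp0 : p ≠ 0) (hp : ‖p‖ < 1) (m i : ℕ) :
    ‖thetaCoeff p (-m - i)‖ ≤ ‖thetaCoeff p (-m)‖ * ‖p‖ ^ i := by
  have hexp : (-m * -i : ℤ) = (m * i : ℕ) := by push_cast; ring
  rw [sub_eq_add_neg, thetaCoeff_add hp0, thetaCoeff_neg hp0 i, hexp, zpow_natCast, zpow_natCast,
    norm_mul, norm_mul, norm_mul, norm_pow, norm_pow, mul_assoc]
  gcongr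
  calc ‖thetaCoeff p i‖ * ‖p‖ ^ i * ‖p‖ ^ (m * i) ≤ 1 * ‖p‖ ^ i * 1 := by
        gcongr
        exacts [norm_thetaCoeff_le_one hp i, pow_le_one₀ (norm_nonneg p) hp.le]
    _ = ‖p‖ ^ i := by ring

lemma summable_thetaCoeff_neg_sub (hp0 : p ≠ 0) (hp : ‖p‖ < 1) (m : ℕ) :
    Summable fun i : ℕ ↦ thetaCoeff p (-m - i) :=
  .of_norm_bounded ((summable_geometric_of_lt_one (norm_nonneg p) hp).mul_left _)
    (norm_thetaCoeff_neg_sub_le hp0 hp m)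

/-- The coefficient of `z ^ k` in `thetaSeries p z / (1 - z)`, i.e. the partial sum of
`thetaCoeff p j` over `j ≤ k`. As `thetaCoeff p (1 - j) = -thetaCoeff p j`, it is even in `k`;
summing up to `-|k|` makes the evenness and the decay in both directions visible. -/
noncomputable def thetaQuotCoeff (p : ℂ) (k : ℤ) : ℂ := ∑' i : ℕ, thetaCoeff p (-k.natAbs - i)

lemma thetaQuotCoeff_neg (p : ℂ) (k : ℤ) : thetaQuotCoeff p (-k) = thetaQuotCoeff p k := by
  rw [thetaQuotCoeff, thetaQuotCoeff, Int.natAbs_neg]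

lemma norm_thetaQuotCoeff_le (hp0 : p ≠ 0) (hp : ‖p‖ < 1) (k : ℤ) :
    ‖thetaQuotCoeff p k‖ ≤ ‖thetaCoeff p (-k.natAbs)‖ * (1 - ‖p‖)⁻¹ :=
  tsum_of_norm_bounded ((hasSum_geometric_of_lt_one (norm_nonneg p) hp).mul_left _)
    (norm_thetaCoeff_neg_sub_le hp0 hp k.natAbs)

lemma thetaQuotCoeff_sub_of_nonpos (hp0 : p ≠ 0) (hp : ‖p‖ < 1) {k : ℤ} (hk : k ≤ 0) :
    thetaQuotCoeff p k - thetaQuotCoeff p (k - 1) = thetaCoeff p k := by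
  rw [thetaQuotCoeff, thetaQuotCoeff, (summable_thetaCoeff_neg_sub hp0 hp _).tsum_eq_zero_add,
    sub_eq_iff_eq_add]
  congr 1
  · congr 1
    omega
  · refine tsum_congr fun i ↦ congrArg _ ?_
    omega

lemma thetaQuotCoeff_sub (hp0 : p ≠ 0) (hp : ‖p‖ < 1) (k : ℤ) :
    thetaQuotCoeff p k - thetaQuotCoeff p (k - 1) = thetaCoeff p k := by
  rcases le_or_gt k 0 with hk | hk
  · exact thetaQuotCoeff_sub_of_nonpos hp0 hp hk
  · have h := thetaQuotCoeff_sub_of_nonpos hp0 hp (k := 1 - k) (by omega)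
    rw [show 1 - k - 1 = -k by ring, thetaQuotCoeff_neg, ← neg_sub k 1, thetaQuotCoeff_neg,
      neg_sub, thetaCoeff_one_sub] at h
    linear_combination -h

lemma norm_thetaCoeff_neg_natAbs_le (hp0 : p ≠ 0) (hp : ‖p‖ < 1) (k : ℤ) :
    ‖thetaCoeff p (-k.natAbs)‖ ≤ ‖thetaCoeff p k‖ := by
  obtain ⟨n, rfl | rfl⟩ := k.eq_nat_or_neg
  · rw [Int.natAbs_natCast, thetaCoeff_neg hp0, zpow_natCast, norm_mul, norm_pow]
    exact mul_le_of_le_one_right (norm_nonneg _) (pow_le_one₀ (norm_nonneg p) hp.le)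
  · simp

lemma summable_thetaQuotCoeff_mul_zpow (hp0 : p ≠ 0) (hp : ‖p‖ < 1) (hz : z ≠ 0) :
    Summable fun k : ℤ ↦ thetaQuotCoeff p k * z ^ k := by
  refine .of_norm_bounded
    ((summable_thetaCoeff_mul_zpow hp0 hp hz).norm.mul_right (1 - ‖p‖)⁻¹) fun k ↦ ?_
  have : 0 < 1 - ‖p‖ := sub_pos.mpr hp
  calc ‖thetaQuotCoeff p k * z ^ k‖
      ≤ ‖thetaCoeff p k‖ * (1 - ‖p‖)⁻¹ * ‖z ^ k‖ := by
        rw [norm_mul]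
        gcongr
        exact (norm_thetaQuotCoeff_le hp0 hp k).trans
          (by gcongr; exact norm_thetaCoeff_neg_natAbs_le hp0 hp k)
    _ = ‖thetaCoeff p k * z ^ k‖ * (1 - ‖p‖)⁻¹ := by rw [norm_mul]; ring

/-- The Laurent expansion of `thetaSeries p z / (1 - z)`, which remains meaningful at the
removable singularity `z = 1`. -/
noncomputable def thetaQuot (p z : ℂ) : ℂ := ∑' k : ℤ, thetaQuotCoeff p k * z ^ k

lemma one_sub_mul_thetaQuot (hp0 : p ≠ 0) (hp : ‖p‖ < 1) (hz : z ≠ 0) :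
    (1 - z) * thetaQuot p z = thetaSeries p z := by
  have hsum := summable_thetaQuotCoeff_mul_zpow hp0 hp hz
  have hshift : z * thetaQuot p z = ∑' k : ℤ, thetaQuotCoeff p (k - 1) * z ^ k := by
    rw [thetaQuot, ← tsum_mul_left, ← (Equiv.addRight (1 : ℤ)).tsum_eq (fun k ↦ _ * z ^ k)]
    refine tsum_congr fun k ↦ ?_
    rw [Equiv.coe_addRight, add_sub_cancel_right, zpow_add_one₀ hz]
    ring
  have hsum' : Summable fun k : ℤ ↦ thetaQuotCoeff p (k - 1) * z ^ k := by
    refine (hsum.sub (summable_thetaCoeff_mul_zpow hp0 hp hz)).congr fun k ↦ ?_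
    rw [← thetaQuotCoeff_sub hp0 hp k]
    ring
  rw [sub_mul, one_mul, hshift, thetaQuot, ← hsum.tsum_sub hsum', thetaSeries]
  refine tsum_congr fun k ↦ ?_
  rw [← sub_mul, thetaQuotCoeff_sub hp0 hp]

lemma thetaQuot_eq_of_ne_one (hp0 : p ≠ 0) (hp : ‖p‖ < 1) (hz : z ≠ 0) (hz1 : z ≠ 1) :
    thetaQuot p z = qPochInf (z * p) p * qPochInf (p / z) p * qPochInf p p := by
  have h := one_sub_mul_thetaQuot hp0 hp hz
  rw [jacobi_tripleProduct hp0 hp hz, qPochInf_eq_one_sub_mul z hp] at h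
  refine mul_left_cancel₀ (sub_ne_zero.mpr hz1.symm) ?_
  linear_combination h

lemma thetaQuot_one (hp0 : p ≠ 0) (hp : ‖p‖ < 1) : thetaQuot p 1 = qPochInf p p ^ 3 := by
  have hquot : ContinuousAt (thetaQuot p) 1 :=
    continuousAt_tsum_mul_zpow (fun _ ↦ summable_thetaQuotCoeff_mul_zpow hp0 hp) one_ne_zero
  have hprod : ContinuousAt
      (fun z ↦ qPochInf (z * p) p * qPochInf (p / z) p * qPochInf p p) 1 := by
    have hq := continuous_qPochInf hp
    exact ((hq.continuousAt.comp (continuousAt_id.mul_const p)).mul (hq.continuousAt.comp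
      (continuousAt_const.div continuousAt_id one_ne_zero))).mul_const _
  have heq : thetaQuot p =ᶠ[𝓝[≠] 1]
      fun z ↦ qPochInf (z * p) p * qPochInf (p / z) p * qPochInf p p := by
    filter_upwards [self_mem_nhdsWithin, mem_nhdsWithin_of_mem_nhds
      (isOpen_ne.mem_nhds one_ne_zero)] with z hz1 hz
    exact thetaQuot_eq_of_ne_one hp0 hp hz hz1
  rw [(hquot.eventuallyEq_nhds_iff_eventuallyEq_nhdsNE hprod).mp heq |>.eq_of_nhds]
  simp only [one_mul, div_one]
  ring

lemma summable_norm_thetaQuotCoeff_div (hp0 : p ≠ 0) (hpb : ‖p‖ < ‖b‖) (hb : ‖b‖ < 1) :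
    Summable fun k : ℤ ↦ ‖thetaQuotCoeff p k / (thetaCoeff p k * b ^ k)‖ := by
  have hp : ‖p‖ < 1 := hpb.trans hb
  have hb0 : 0 < ‖b‖ := (norm_nonneg p).trans_lt hpb
  have hle (k : ℤ) : ‖thetaQuotCoeff p k / (thetaCoeff p k * b ^ k)‖ ≤
      ‖thetaCoeff p (-k.natAbs) / (thetaCoeff p k * b ^ k)‖ * (1 - ‖p‖)⁻¹ := by
    rw [norm_div, norm_div, div_mul_eq_mul_div]
    gcongr
    exact norm_thetaQuotCoeff_le hp0 hp k
  refine .of_nonneg_of_le (fun _ ↦ norm_nonneg _) hle (.mul_right _ (.of_nat_of_neg ?_ ?_))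
  · refine (summable_geometric_of_lt_one (by positivity) ((div_lt_one hb0).mpr hpb)).congr
      fun n ↦ ?_
    have ht := thetaCoeff_ne_zero hp0 n
    rw [Int.natAbs_natCast, thetaCoeff_neg hp0, mul_div_mul_left _ _ ht, ← div_zpow, zpow_natCast,
      norm_pow, norm_div]
  · refine (summable_geometric_of_lt_one hb0.le hb).congr fun n ↦ ?_
    have ht := thetaCoeff_ne_zero hp0 (-n)
    rw [Int.natAbs_neg, Int.natAbs_natCast, div_mul_cancel_left₀ ht, zpow_neg, inv_inv,
      zpow_natCast, norm_pow]

lemma tsum_thetaCoeff_mul_thetaQuot (hp0 : p ≠ 0) (ha : a ≠ 0) (hpb : ‖p‖ < ‖b‖)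
    (hb : ‖b‖ < 1) :
    ∑' n : ℤ, thetaCoeff p n * (a * b) ^ n * thetaQuot p (a * p ^ n) =
      thetaSeries p (a * b) * ∑' k : ℤ, thetaQuotCoeff p k / (thetaCoeff p k * b ^ k) := by
  have hp : ‖p‖ < 1 := hpb.trans hb
  have hb0 : b ≠ 0 := norm_pos_iff.mp ((norm_nonneg p).trans_lt hpb)
  have htheta := (summable_thetaCoeff_mul_zpow hp0 hp (mul_ne_zero ha hb0)).norm
  have hquot := summable_norm_thetaQuotCoeff_div hp0 hpb hb
  have hprod := summable_mul_of_summable_norm hquot htheta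
  let e : ℤ × ℤ ≃ ℤ × ℤ := (Equiv.prodComm ℤ ℤ).trans (.prodShear (.refl ℤ) Equiv.addRight)
  have he (n k : ℤ) : e (n, k) = (k, n + k) := rfl
  rw [mul_comm (thetaSeries p _), thetaSeries, tsum_mul_tsum_of_summable_norm hquot htheta,
    ← e.tsum_eq]
  refine Eq.trans ?_ (e.summable_iff.mpr hprod).tsum_prod.symm
  refine tsum_congr fun n ↦ ?_
  rw [thetaQuot, ← tsum_mul_left]
  refine tsum_congr fun k ↦ ?_
  have ht := thetaCoeff_ne_zero hp0 k
  rw [Function.comp_apply, he, thetaCoeff_add hp0, zpow_add₀ (mul_ne_zero ha hb0),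
    mul_zpow a b k, mul_zpow a (p ^ n), ← zpow_mul]
  field_simp

lemma thetaSeries_one (hp0 : p ≠ 0) (hp : ‖p‖ < 1) : thetaSeries p 1 = 0 := by
  rw [← one_sub_mul_thetaQuot hp0 hp one_ne_zero, sub_self, zero_mul]

lemma thetaSeries_eq_mul_thetaQuot (hp0 : p ≠ 0) (hp : ‖p‖ < 1) (ha : a ≠ 0) (n : ℤ) :
    thetaSeries p a =
      thetaCoeff p n * a ^ n * ((1 - a * p ^ n) * thetaQuot p (a * p ^ n)) := by
  rw [one_sub_mul_thetaQuot hp0 hp (mul_ne_zero ha (zpow_ne_zero n hp0)),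
    ← thetaSeries_eq_mul_thetaSeries_mul_zpow hp0 ha]

lemma thetaQuot_zpow_of_ne_zero (hp0 : p ≠ 0) (hp : ‖p‖ < 1) {n : ℤ} (hn : n ≠ 0) :
    thetaQuot p (p ^ n) = 0 := by
  have hpn : 1 - p ^ n ≠ 0 := by
    refine sub_ne_zero.mpr fun h ↦ hn ?_
    refine (zpow_eq_one_iff_right₀ (norm_nonneg p) hp.ne).mp ?_
    rw [← norm_zpow, ← h, norm_one]
  have h := thetaSeries_eq_mul_thetaQuot hp0 hp one_ne_zero n
  simpa [thetaSeries_one hp0 hp, thetaCoeff_ne_zero hp0, hpn] using h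

lemma thetaSeries_mul_tsum_thetaQuotCoeff_div (hp0 : p ≠ 0) (hpb : ‖p‖ < ‖b‖) (hb : ‖b‖ < 1) :
    thetaSeries p b * ∑' k : ℤ, thetaQuotCoeff p k / (thetaCoeff p k * b ^ k) =
      qPochInf p p ^ 3 := by
  have hp : ‖p‖ < 1 := hpb.trans hb
  have h := tsum_thetaCoeff_mul_thetaQuot hp0 one_ne_zero hpb hb
  simp only [one_mul] at h
  rw [← h, ← thetaQuot_one hp0 hp, tsum_eq_single 0 fun n hn ↦ by
    rw [thetaQuot_zpow_of_ne_zero hp0 hp hn, mul_zero]]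
  simp [thetaCoeff_zero]

lemma thetaSeries_mul_tsum_zpow_div_one_sub (hp0 : p ≠ 0) (ha : a ≠ 0)
    (hap : ∀ n : ℤ, a * p ^ n ≠ 1) (hpb : ‖p‖ < ‖b‖) (hb : ‖b‖ < 1) :
    thetaSeries p a * ∑' n : ℤ, b ^ n / (1 - a * p ^ n) =
      thetaSeries p (a * b) * ∑' k : ℤ, thetaQuotCoeff p k / (thetaCoeff p k * b ^ k) := by
  have hp : ‖p‖ < 1 := hpb.trans hb
  rw [← tsum_thetaCoeff_mul_thetaQuot hp0 ha hpb hb, ← tsum_mul_left]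
  refine tsum_congr fun n ↦ ?_
  have hn : 1 - a * p ^ n ≠ 0 := sub_ne_zero.mpr (hap n).symm
  rw [thetaSeries_eq_mul_thetaQuot hp0 hp ha n, mul_zpow]
  field_simp

lemma mul_zpow_ne_one_of_norm_lt (hpz : ‖p‖ < ‖z‖) (hz : ‖z‖ < 1) (n : ℤ) : z * p ^ n ≠ 1 := by
  intro h
  cases n with
  | ofNat k =>
    refine hz.not_ge ?_
    calc 1 = ‖z‖ * ‖p‖ ^ k := by simpa using (congrArg norm h).symm
      _ ≤ ‖z‖ := mul_le_of_le_one_right (norm_nonneg z)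
        (pow_le_one₀ (norm_nonneg p) (hpz.trans hz).le)
  | negSucc k =>
    have hzk : z = p ^ (k + 1) := eq_of_div_eq_one (by rwa [zpow_negSucc, ← div_eq_mul_inv] at h)
    refine hpz.not_ge ?_
    rw [hzk, norm_pow]
    exact pow_le_of_le_one (norm_nonneg p) (hpz.trans hz).le k.succ_ne_zero

theorem tsum_zpow_div_one_sub_mul_zpow (hp0 : p ≠ 0) (ha : a ≠ 0)
    (hap : ∀ n : ℤ, a * p ^ n ≠ 1) (hpb : ‖p‖ < ‖b‖) (hb : ‖b‖ < 1) :
    ∑' n : ℤ, b ^ n / (1 - a * p ^ n) =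
      thetaSeries p (a * b) * qPochInf p p ^ 3 / (thetaSeries p b * thetaSeries p a) := by
  have hp : ‖p‖ < 1 := hpb.trans hb
  have hb0 : b ≠ 0 := norm_pos_iff.mp ((norm_nonneg p).trans_lt hpb)
  have hθa : thetaSeries p a ≠ 0 := thetaSeries_ne_zero hp0 hp ha hap
  have hθb : thetaSeries p b ≠ 0 :=
    thetaSeries_ne_zero hp0 hp hb0 (mul_zpow_ne_one_of_norm_lt hpb hb)
  rw [eq_div_iff (mul_ne_zero hθb hθa), ← thetaSeries_mul_tsum_thetaQuotCoeff_div hp0 hpb hb]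
  linear_combination thetaSeries p b * thetaSeries_mul_tsum_zpow_div_one_sub hp0 ha hap hpb hb

end ThetaQuotient

theorem stmt7_general (q : ℂ) (hq0 : q ≠ 0) (hq1 : ‖q‖ < 1) :
    phi (-q ^ 5) ≠ 0 ∧ ramTheta q (q ^ 9) ≠ 0 ∧
    (∑' n : ℤ, q ^ (5 * n) / (1 + q ^ (10 * n + 1)))
      = ramTheta (q ^ 4) (q ^ 6) * (qPochInf (q ^ 10) (q ^ 10)) ^ 3
        / (phi (-q ^ 5) * ramTheta q (q ^ 9)) := by
  have hpow (m : ℕ) : q ^ m ≠ 0 := pow_ne_zero m hq0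
  have hlt {m n : ℕ} (hmn : m < n) : ‖q ^ n‖ < ‖q ^ m‖ := by
    simpa only [norm_pow] using pow_lt_pow_right_of_lt_one₀ (norm_pos_iff.mpr hq0) hq1 hmn
  have hp : ‖q ^ 10‖ < 1 := by simpa using hlt (m := 0) (n := 10) (by norm_num)
  have hb : ‖q ^ 5‖ < 1 := by simpa using hlt (m := 0) (n := 5) (by norm_num)
  have hpb : ‖q ^ 10‖ < ‖q ^ 5‖ := hlt (by norm_num)
  have hap : ∀ n : ℤ, -q * (q ^ 10) ^ n ≠ 1 :=
    mul_zpow_ne_one_of_norm_lt (by simpa using hlt (m := 1) (n := 10) (by norm_num))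
      (by simpa using hq1)
  have hphi : phi (-q ^ 5) = thetaSeries (q ^ 10) (q ^ 5) := by
    rw [phi_neg_eq_thetaSeries (hpow 5), ← pow_mul]
  have hf19 : ramTheta q (q ^ 9) = thetaSeries (q ^ 10) (-q) := by
    rw [ramTheta_eq_thetaSeries hq0]
    ring_nf
  have hf46 : ramTheta (q ^ 4) (q ^ 6) = thetaSeries (q ^ 10) (-q * q ^ 5) := by
    rw [ramTheta_comm, ramTheta_eq_thetaSeries (hpow 6)]
    ring_nf
  rw [hphi, hf19, hf46,
    ← tsum_zpow_div_one_sub_mul_zpow (hpow 10) (neg_ne_zero.mpr hq0) hap hpb hb]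
  refine ⟨thetaSeries_ne_zero (hpow 10) hp (hpow 5) (mul_zpow_ne_one_of_norm_lt hpb hb),
    thetaSeries_ne_zero (hpow 10) hp (neg_ne_zero.mpr hq0) hap, tsum_congr fun n ↦ ?_⟩
  rw [zpow_add_one₀ hq0, zpow_mul, zpow_mul]
  norm_cast
  ring

theorem stmt7 (q : ℝ) (hq0 : 0 < q) (hq1 : q < 1) :
    phi (-(q : ℂ) ^ 5) ≠ 0 ∧ ramTheta (q : ℂ) ((q : ℂ) ^ 9) ≠ 0 ∧
    (∑' n : ℤ, (q : ℂ) ^ (5 * n) / (1 + (q : ℂ) ^ (10 * n + 1)))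
      = ramTheta ((q : ℂ) ^ 4) ((q : ℂ) ^ 6) * (qPochInf ((q : ℂ) ^ 10) ((q : ℂ) ^ 10)) ^ 3
        / (phi (-(q : ℂ) ^ 5) * ramTheta (q : ℂ) ((q : ℂ) ^ 9)) :=
  stmt7_general q (mod_cast hq0.ne') (by simpa [abs_of_pos hq0] using hq1)
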